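/- arXiv:2504.05123 — 2 statements merged into one kernel-verified Lean document; each statement's English description precedes it below -/
import Mathlib

section
/- Let n ≥ 2 and let π be a partition of the ground set of the crown poset C_{2n} into at least two blocks, each of which induces a connected subposet. Then π is compatible (i.e., the transitive closure of the relation B ≤_π B′, defined by the existence of x ∈ B and y ∈ B′ with x ≤ y in C_{2n}, is antisymmetric) if and only if at least one block of π has odd cardinality. -/
/-- Cover relations of the crown poset `C_{2n}` on `{1,…,2n}`:
`2i−1 ≺ 2i` for `1 ≤ i ≤ n`, `2i+1 ≺ 2i` for `1 ≤ i ≤ n−1`, and `1 ≺ 2n`. -/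
def crownCover (n x y : ℕ) : Prop :=
  Odd x ∧ Even y ∧ (y = x + 1 ∨ x = y + 1 ∨ (x = 1 ∧ y = 2 * n))

/-- The order relation of the crown poset `C_{2n}` (restricted to `{1,…,2n}`). -/
def crownLe (n x y : ℕ) : Prop := x = y ∨ crownCover n x y

/-- The ground set `{1,…,2n}` of the crown poset. -/
def crownGround (n : ℕ) : Finset ℕ := Finset.Icc 1 (2 * n)

/-- `π` is a partition of the finite set `s`: blocks are nonempty subsets of `s`
and each element of `s` lies in exactly one block. -/
def IsPartitionOn (s : Finset ℕ) (π : Finset (Finset ℕ)) : Prop :=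
  (∀ B ∈ π, B.Nonempty) ∧ (∀ B ∈ π, B ⊆ s) ∧ ∀ x ∈ s, ∃! B, B ∈ π ∧ x ∈ B

/-- A block is connected if it induces a connected subgraph of `G`. -/
def BlockConnected (G : SimpleGraph ℕ) (B : Finset ℕ) : Prop :=
  (G.induce (B : Set ℕ)).Connected

/-- A connected partition of `s` with respect to the graph `G`. -/
def IsConnectedPartition (s : Finset ℕ) (G : SimpleGraph ℕ) (π : Finset (Finset ℕ)) : Prop :=
  IsPartitionOn s π ∧ ∀ B ∈ π, BlockConnected G B

/-- The comparability graph of the relation `le`. -/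
def compGraph (le : ℕ → ℕ → Prop) : SimpleGraph ℕ := SimpleGraph.fromRel le

/-- The relation `B ≤_π B'` on blocks of `π`: both are blocks and there are
`x ∈ B`, `y ∈ B'` with `x ≤ y`. -/
def blockRel (le : ℕ → ℕ → Prop) (π : Finset (Finset ℕ)) (B B' : Finset ℕ) : Prop :=
  B ∈ π ∧ B' ∈ π ∧ ∃ x ∈ B, ∃ y ∈ B', le x y

/-- `π` is compatible: the transitive closure of `≤_π` is antisymmetric. -/
def IsCompatible (le : ℕ → ℕ → Prop) (π : Finset (Finset ℕ)) : Prop :=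
  ∀ B ∈ π, ∀ B' ∈ π, Relation.TransGen (blockRel le π) B B' →
    Relation.TransGen (blockRel le π) B' B → B = B'

/-!
The Hasse diagram of `C_{2n}` is a cycle whose edges, traversed in one direction, alternately go up
and down. The ascending edges form a perfect matching, and so do the descending ones, so the
cardinality of a block has the same parity as the number of ascending edges with exactly one
endpoint in it, and likewise for descending edges.

If some block is odd, edges of both kinds therefore join distinct blocks, say `u` ascending and `d`
descending ones. Adding `d` along each of the former and `-u` along each of the latter gives a
single-valued potential on the cycle, constant on connected blocks and strictly increasing along
the order between distinct blocks; hence `π` is compatible.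

Conversely, a compatible partition has a minimal block. It is a proper connected lower set, that
is, an arc with minimal elements at both ends, so exactly one ascending edge crosses its boundary.
-/

/-- The cyclic successor `1 ↦ 2 ↦ ⋯ ↦ 2n ↦ 1` on `{1,…,2n}`. The Hasse diagram of the crown poset
is the cycle with edges `{x, crownSucc n x}`; such an edge goes up from odd `x` and down from
even `x`. -/
def crownSucc (n x : ℕ) : ℕ := if x = 2 * n then 1 else x + 1

/-- Two points lie in a common block of `π`. -/
def SameBlock (π : Finset (Finset ℕ)) (x y : ℕ) : Prop := ∃ B ∈ π, x ∈ B ∧ y ∈ B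

/-- The edges `{x, crownSucc n x}` of the crown that start at a point satisfying `p` and have
exactly one endpoint in `B`, each recorded by its start `x`. -/
def crownCut (n : ℕ) (p : ℕ → Prop) [DecidablePred p] (B : Finset ℕ) : Finset ℕ :=
  {x ∈ crownGround n | p x ∧ ¬(x ∈ B ↔ crownSucc n x ∈ B)}

section Partition

variable {s B C : Finset ℕ} {π : Finset (Finset ℕ)} {x y : ℕ}

theorem IsPartitionOn.eq_of_mem (hπ : IsPartitionOn s π) (hB : B ∈ π) (hC : C ∈ π)
    (hxB : x ∈ B) (hxC : x ∈ C) : B = C :=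
  (hπ.2.2 x (hπ.2.1 B hB hxB)).unique ⟨hB, hxB⟩ ⟨hC, hxC⟩

theorem IsPartitionOn.mem_iff_mem_of_sameBlock (hπ : IsPartitionOn s π) (hB : B ∈ π)
    (h : SameBlock π x y) : x ∈ B ↔ y ∈ B := by
  obtain ⟨C, hC, hxC, hyC⟩ := h
  exact ⟨fun hx => hπ.eq_of_mem hC hB hxC hx ▸ hyC, fun hy => hπ.eq_of_mem hC hB hyC hy ▸ hxC⟩

theorem IsPartitionOn.notMem_of_two_le_card (hπ : IsPartitionOn s π) (hcard : 2 ≤ π.card) :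
    s ∉ π := by
  intro hs
  obtain ⟨B, hB, hne⟩ := Finset.exists_mem_ne hcard s
  obtain ⟨x, hx⟩ := hπ.1 B hB
  exact hne (hπ.eq_of_mem hB hs hx (hπ.2.1 B hB hx))

end Partition

section Compatible

variable {le : ℕ → ℕ → Prop} {s : Finset ℕ} {π : Finset (Finset ℕ)} {α : Type*}

theorem isCompatible_of_height [Preorder α] (g : Finset ℕ → α)
    (hg : ∀ B B', blockRel le π B B' → B ≠ B' → g B < g B') : IsCompatible le π := by
  have eq_or_lt : ∀ B B', Relation.TransGen (blockRel le π) B B' → B = B' ∨ g B < g B' := by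
    intro B B' h
    induction h with
    | single h => exact or_iff_not_imp_left.2 (hg _ _ h)
    | @tail C D _ h ih =>
      rcases eq_or_ne C D with rfl | hne
      · exact ih
      · rcases ih with rfl | hlt
        · exact Or.inr (hg _ _ h hne)
        · exact Or.inr (hlt.trans (hg _ _ h hne))
  intro B _ B' _ h h'
  rcases eq_or_lt B B' h with heq | hlt
  · exact heq
  · exact (eq_or_lt B' B h').elim Eq.symm fun hgt => absurd hgt hlt.asymm

theorem IsPartitionOn.isCompatible_of_potential [Preorder α] (hπ : IsPartitionOn s π) (f : ℕ → α)
    (hconst : ∀ B ∈ π, ∀ x ∈ B, ∀ y ∈ B, f x = f y)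
    (hlt : ∀ x ∈ s, ∀ y ∈ s, le x y → ¬SameBlock π x y → f x < f y) : IsCompatible le π := by
  have min_mem : ∀ B ∈ π, sInf (B : Set ℕ) ∈ B := fun B hB =>
    Finset.mem_coe.1 (Nat.sInf_mem (hπ.1 B hB).to_set)
  refine isCompatible_of_height (fun B => f (sInf (B : Set ℕ))) ?_
  rintro B B' ⟨hB, hB', x, hx, y, hy, hxy⟩ hne
  have hsep : ¬SameBlock π x y := fun h =>
    hne (hπ.eq_of_mem hB hB' ((hπ.mem_iff_mem_of_sameBlock hB h).1 hx) hy)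
  calc f (sInf (B : Set ℕ)) = f x := hconst B hB _ (min_mem B hB) x hx
    _ < f y := hlt x (hπ.2.1 B hB hx) y (hπ.2.1 B' hB' hy) hxy hsep
    _ = f (sInf (B' : Set ℕ)) := hconst B' hB' y hy _ (min_mem B' hB')

theorem IsCompatible.exists_minimal_block (h : IsCompatible le π) (hπ : π.Nonempty) :
    ∃ B ∈ π, ∀ B', blockRel le π B' B → B' = B := by
  let r : π → π → Prop := fun A C => Relation.TransGen (blockRel le π) A.1 C.1 ∧ A ≠ C
  have : IsTrans π r := ⟨by
    rintro A C D ⟨hAC, hne⟩ ⟨hCD, -⟩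
    refine ⟨hAC.trans hCD, ?_⟩
    rintro rfl
    exact hne (Subtype.ext (h _ A.2 _ C.2 hAC hCD))⟩
  have : Std.Irrefl r := ⟨fun _ hA => hA.2 rfl⟩
  obtain ⟨B, -, hmin⟩ := (Finite.wellFounded_of_trans_of_irrefl r).has_min Set.univ
    (have := hπ.to_subtype; Set.univ_nonempty)
  refine ⟨B.1, B.2, fun B' hB' => ?_⟩
  by_contra hne
  exact hmin ⟨B', hB'.1⟩ trivial ⟨.single hB', fun heq => hne (congrArg Subtype.val heq)⟩

theorem BlockConnected.eq_of_forall_adj {G : SimpleGraph ℕ} {B : Finset ℕ} {f : ℕ → α}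
    (hB : BlockConnected G B) (hf : ∀ x ∈ B, ∀ y ∈ B, G.Adj x y → f x = f y) {x y : ℕ}
    (hx : x ∈ B) (hy : y ∈ B) : f x = f y := by
  obtain ⟨walk⟩ := hB.preconnected ⟨x, hx⟩ ⟨y, hy⟩
  have eq_of_walk : ∀ u v : (B : Set ℕ), (G.induce (B : Set ℕ)).Walk u v → f u = f v := by
    intro u v walk
    induction walk with
    | nil => rfl
    | @cons u v _ hadj _ ih => exact (hf u u.2 v v.2 hadj).trans ih
  exact eq_of_walk _ _ walk

end Compatible

section CrownSucc

variable {n x y : ℕ} {B : Finset ℕ}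

theorem crownSucc_mem_crownGround (hx : x ∈ crownGround n) : crownSucc n x ∈ crownGround n := by
  simp only [crownGround, Finset.mem_Icc, crownSucc] at *
  split_ifs <;> omega

theorem crownSucc_injOn : Set.InjOn (crownSucc n) (crownGround n) := by
  intro x hx y hy h
  simp only [crownGround, Finset.coe_Icc, Set.mem_Icc, crownSucc] at *
  split_ifs at h <;> omega

theorem crownSucc_surjOn : Set.SurjOn (crownSucc n) (crownGround n) (crownGround n) :=
  Finset.surjOn_of_injOn_of_card_le _ (fun _ => crownSucc_mem_crownGround) crownSucc_injOn le_rfl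

theorem odd_crownSucc_iff : Odd (crownSucc n x) ↔ ¬Odd x := by
  simp only [crownSucc, Nat.odd_iff]
  split_ifs <;> omega

theorem even_crownSucc_iff : Even (crownSucc n x) ↔ ¬Even x := by
  simp only [← Nat.not_odd_iff_even, odd_crownSucc_iff]

theorem crownLe_crownSucc (hx : Odd x) : crownLe n x (crownSucc n x) := by
  have hsucc : Even (crownSucc n x) := by rwa [even_crownSucc_iff, Nat.not_even_iff_odd]
  refine Or.inr ⟨hx, hsucc, ?_⟩
  simp only [crownSucc, Nat.odd_iff] at *
  split_ifs <;> omega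

theorem crownSucc_crownLe (hx : Even x) : crownLe n (crownSucc n x) x := by
  have hsucc : Odd (crownSucc n x) := by rwa [odd_crownSucc_iff, Nat.not_odd_iff_even]
  refine Or.inr ⟨hsucc, hx, ?_⟩
  simp only [crownSucc]
  split_ifs <;> omega

theorem crownCover.eq_crownSucc (h : crownCover n x y) (hx : x ∈ crownGround n)
    (hy : y ∈ crownGround n) : y = crownSucc n x ∨ x = crownSucc n y := by
  simp only [crownCover, crownGround, Finset.mem_Icc, crownSucc, Nat.odd_iff, Nat.even_iff] at *
  split_ifs <;> omega

theorem BlockConnected.eq_of_forall_crownSucc {α : Type*} {f : ℕ → α}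
    (hB : BlockConnected (compGraph (crownLe n)) B) (hsub : B ⊆ crownGround n)
    (hf : ∀ x ∈ B, crownSucc n x ∈ B → f x = f (crownSucc n x)) (hx : x ∈ B) (hy : y ∈ B) :
    f x = f y := by
  have eq_of_cover : ∀ u ∈ B, ∀ v ∈ B, crownCover n u v → f u = f v := by
    intro u hu v hv huv
    rcases huv.eq_crownSucc (hsub hu) (hsub hv) with rfl | rfl
    · exact hf u hu hv
    · exact (hf v hv hu).symm
  refine hB.eq_of_forall_adj (fun u hu v hv hadj => ?_) hx hy
  obtain ⟨hne, (heq | huv) | (heq | hvu)⟩ := hadj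
  · exact absurd heq hne
  · exact eq_of_cover u hu v hv huv
  · exact absurd heq.symm hne
  · exact (eq_of_cover v hv u hu hvu).symm

-- If `B` left along two edges, removing both would cut the cycle into two arcs that meet `B`.
theorem BlockConnected.eq_of_crownSucc_notMem (hB : BlockConnected (compGraph (crownLe n)) B)
    (hsub : B ⊆ crownGround n) (hx : x ∈ B) (hy : y ∈ B) (hx' : crownSucc n x ∉ B)
    (hy' : crownSucc n y ∉ B) : x = y := by
  wlog hlt : x < y generalizing x y
  · by_contra hne
    exact hne (this hy hx hy' hx' (by omega)).symm
  have arc_iff : ∀ z ∈ B, crownSucc n z ∈ B →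
      (x < z ∧ z ≤ y) = (x < crownSucc n z ∧ crownSucc n z ≤ y) := by
    intro z _ hz'
    have hzx : z ≠ x := fun h => hx' (h ▸ hz')
    have hzy : z ≠ y := fun h => hy' (h ▸ hz')
    have hx := Finset.mem_Icc.1 (hsub hx)
    have hy := Finset.mem_Icc.1 (hsub hy)
    simp only [crownSucc, eq_iff_iff]
    split_ifs <;> omega
  have := hB.eq_of_forall_crownSucc hsub (f := fun z => x < z ∧ z ≤ y) arc_iff hx hy
  simp [hlt] at this

theorem exists_crownSucc_notMem (hsub : B ⊂ crownGround n) (hne : B.Nonempty) :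
    ∃ x ∈ B, crownSucc n x ∉ B := by
  by_contra! hclosed
  have mem_of_le : ∀ x ∈ B, ∀ y, x ≤ y → y ≤ 2 * n → y ∈ B := by
    intro x hx
    refine Nat.le_induction (fun _ => hx) (fun y _ ih hy => ?_)
    simpa [crownSucc, show y ≠ 2 * n by omega] using hclosed y (ih (by omega))
  obtain ⟨x, hx⟩ := hne
  have htop : 2 * n ∈ B := mem_of_le x hx _ (Finset.mem_Icc.1 (hsub.1 hx)).2 le_rfl
  have hone : 1 ∈ B := by simpa [crownSucc] using hclosed _ htop
  refine hsub.2 fun y hy => ?_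
  obtain ⟨hy₁, hy₂⟩ := Finset.mem_Icc.1 hy
  exact mem_of_le 1 hone y hy₁ hy₂

end CrownSucc

section Parity

variable {n : ℕ} {B : Finset ℕ}

-- In the perfect matching given by `p`, an edge outside the cut has zero or two endpoints in `B`.
theorem odd_card_crownCut_iff {p : ℕ → Prop} [DecidablePred p]
    (hp : ∀ x, p (crownSucc n x) ↔ ¬p x) (hsub : B ⊆ crownGround n) :
    Odd (crownCut n p B).card ↔ Odd B.card := by
  let starts := {x ∈ crownGround n | p x ∧ x ∈ B}
  let ends := {x ∈ crownGround n | p x ∧ crownSucc n x ∈ B}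
  have hstarts : starts = {x ∈ B | p x} := by
    ext x
    simp only [starts, Finset.mem_filter]
    exact ⟨fun h => ⟨h.2.2, h.2.1⟩, fun h => ⟨hsub h.1, h.2, h.1⟩⟩
  have hends : ends.card = {x ∈ B | ¬p x}.card := by
    refine Finset.card_nbij (crownSucc n) ?_
      (crownSucc_injOn.mono (Finset.coe_subset.2 (Finset.filter_subset _ _))) ?_
    · intro x hx
      obtain ⟨-, hpx, hxB⟩ := Finset.mem_filter.1 hx
      exact Finset.mem_filter.2 ⟨hxB, fun h => (hp x).1 h hpx⟩
    · intro y hy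
      obtain ⟨hyB, hpy⟩ := Finset.mem_filter.1 hy
      obtain ⟨x, hx, rfl⟩ := crownSucc_surjOn (hsub hyB)
      exact ⟨x, Finset.mem_filter.2 ⟨hx, not_not.1 fun h => hpy ((hp x).2 h), hyB⟩, rfl⟩
  have hcard : B.card = starts.card + ends.card := by
    rw [hstarts, hends, Finset.card_filter_add_card_filter_not]
  have hcut : crownCut n p B = (starts \ ends) ∪ (ends \ starts) := by
    ext x
    simp only [crownCut, starts, ends, Finset.mem_filter, Finset.mem_union, Finset.mem_sdiff]
    tauto
  have hstarts_split := Finset.card_sdiff_add_card_inter starts ends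
  have hends_split := Finset.card_sdiff_add_card_inter ends starts
  rw [Finset.inter_comm] at hends_split
  rw [hcut, Finset.card_union_of_disjoint disjoint_sdiff_sdiff, hcard, Nat.odd_iff, Nat.odd_iff]
  omega

theorem odd_card_of_lower_closed (hB : BlockConnected (compGraph (crownLe n)) B)
    (hsub : B ⊂ crownGround n) (hne : B.Nonempty)
    (hlower : ∀ x ∈ crownGround n, ∀ y ∈ B, crownLe n x y → x ∈ B) : Odd B.card := by
  obtain ⟨e, heB, he⟩ := exists_crownSucc_notMem hsub hne
  have e_odd : Odd e := by
    by_contra h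
    exact he (hlower _ (crownSucc_mem_crownGround (hsub.1 heB)) e heB
      (crownSucc_crownLe (Nat.not_odd_iff_even.1 h)))
  have hcut : crownCut n Odd B = {e} := by
    refine Finset.eq_singleton_iff_unique_mem.2 ⟨?_, fun x hx => ?_⟩
    · exact Finset.mem_filter.2 ⟨hsub.1 heB, e_odd, fun h => he (h.1 heB)⟩
    · obtain ⟨hxg, hx_odd, hx⟩ := Finset.mem_filter.1 hx
      have mem_of_succ_mem : crownSucc n x ∈ B → x ∈ B := fun h =>
        hlower x hxg _ h (crownLe_crownSucc hx_odd)
      exact hB.eq_of_crownSucc_notMem hsub.1 (by tauto) heB (by tauto) he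
  rw [← odd_card_crownCut_iff (fun _ => odd_crownSucc_iff) hsub.1, hcut, Finset.card_singleton]
  exact odd_one

theorem IsPartitionOn.exists_not_sameBlock_crownSucc {π : Finset (Finset ℕ)} {p : ℕ → Prop}
    (hπ : IsPartitionOn (crownGround n) π) (hp : ∀ x, p (crownSucc n x) ↔ ¬p x) (hB : B ∈ π)
    (hodd : Odd B.card) : ∃ x ∈ crownGround n, p x ∧ ¬SameBlock π x (crownSucc n x) := by
  classical
  obtain ⟨x, hx⟩ :=
    Finset.card_pos.1 ((odd_card_crownCut_iff hp (hπ.2.1 B hB)).2 hodd).pos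
  obtain ⟨hxg, hpx, hcross⟩ := Finset.mem_filter.1 hx
  exact ⟨x, hxg, hpx, fun h => hcross (hπ.mem_iff_mem_of_sameBlock hB h)⟩

end Parity

section Potential

theorem exists_crown_potential {M : Type*} [AddCommMonoid M] {n : ℕ} (w : ℕ → M)
    (hw : ∑ x ∈ crownGround n, w x = 0) :
    ∃ f : ℕ → M, ∀ x ∈ crownGround n, f (crownSucc n x) = f x + w x := by
  refine ⟨fun x => ∑ i ∈ Finset.Ico 1 x, w i, fun x hx => ?_⟩
  rw [← Finset.sum_Ico_succ_top (Finset.mem_Icc.1 hx).1]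
  unfold crownSucc
  split_ifs with htop
  · rw [htop, Finset.Ico_add_one_right_eq_Icc]
    exact hw.symm
  · rfl

theorem exists_balanced_weight {ι : Type*} {s U D : Finset ι} (hUs : U ⊆ s)
    (hDs : D ⊆ s) (hUD : Disjoint U D) (hU : U.Nonempty) (hD : D.Nonempty) :
    ∃ w : ι → ℤ, ∑ i ∈ s, w i = 0 ∧ (∀ i ∈ U, 0 < w i) ∧ (∀ i ∈ D, w i < 0) ∧
      ∀ i, i ∉ U → i ∉ D → w i = 0 := by
  classical
  refine ⟨fun i => (if i ∈ U then (D.card : ℤ) else 0) - if i ∈ D then (U.card : ℤ) else 0,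
    ?_, fun i hi => ?_, fun i hi => ?_, fun i hiU hiD => ?_⟩
  · rw [Finset.sum_sub_distrib, Finset.sum_ite_mem, Finset.sum_ite_mem,
      Finset.inter_eq_right.2 hUs, Finset.inter_eq_right.2 hDs]
    simp only [Finset.sum_const, nsmul_eq_mul]
    ring
  · simpa [hi, Finset.disjoint_left.1 hUD hi] using hD
  · simpa [hi, Finset.disjoint_right.1 hUD hi] using hU
  · simp [hiU, hiD]

theorem exists_potential_of_ascent_of_descent {n : ℕ} {r : ℕ → Prop}
    (hasc : ∃ x ∈ crownGround n, Odd x ∧ r x) (hdesc : ∃ x ∈ crownGround n, Even x ∧ r x) :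
    ∃ f : ℕ → ℤ, ∀ x ∈ crownGround n, (¬r x → f x = f (crownSucc n x)) ∧
      (Odd x → r x → f x < f (crownSucc n x)) ∧ (Even x → r x → f (crownSucc n x) < f x) := by
  classical
  obtain ⟨w, hsum, hpos, hneg, hzero⟩ := exists_balanced_weight
    (U := {x ∈ crownGround n | Odd x ∧ r x}) (D := {x ∈ crownGround n | Even x ∧ r x})
    (Finset.filter_subset _ _) (Finset.filter_subset _ _)
    (Finset.disjoint_filter.2 fun x _ hodd heven => Nat.not_even_iff_odd.2 hodd.1 heven.1)
    (Finset.filter_nonempty_iff.2 hasc) (Finset.filter_nonempty_iff.2 hdesc)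
  obtain ⟨f, hf⟩ := exists_crown_potential w hsum
  refine ⟨f, fun x hx => ?_⟩
  rw [hf x hx]
  refine ⟨fun hr => ?_, fun hodd hr => ?_, fun heven hr => ?_⟩
  · rw [hzero x (by simp [hr]) (by simp [hr]), add_zero]
  · exact lt_add_of_pos_right _ (hpos x (Finset.mem_filter.2 ⟨hx, hodd, hr⟩))
  · exact add_lt_of_neg_right _ (hneg x (Finset.mem_filter.2 ⟨hx, heven, hr⟩))

end Potential

section CrownPartition

variable {n : ℕ} {π : Finset (Finset ℕ)}

theorem IsConnectedPartition.exists_odd_block_of_isCompatible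
    (hπ : IsConnectedPartition (crownGround n) (compGraph (crownLe n)) π) (hcard : 2 ≤ π.card)
    (h : IsCompatible (crownLe n) π) : ∃ B ∈ π, Odd B.card := by
  obtain ⟨hpart, hconn⟩ := hπ
  obtain ⟨B, hB, hmin⟩ := h.exists_minimal_block (Finset.card_pos.1 (by omega))
  have hproper : B ⊂ crownGround n :=
    (hpart.2.1 B hB).ssubset_of_ne fun heq => hpart.notMem_of_two_le_card hcard (heq ▸ hB)
  refine ⟨B, hB, odd_card_of_lower_closed (hconn B hB) hproper (hpart.1 B hB) ?_⟩
  intro x hx y hy hxy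
  obtain ⟨C, ⟨hC, hxC⟩, -⟩ := hpart.2.2 x hx
  exact hmin C ⟨hC, hB, x, hxC, y, hy, hxy⟩ ▸ hxC

theorem IsConnectedPartition.isCompatible_of_odd_block
    (hπ : IsConnectedPartition (crownGround n) (compGraph (crownLe n)) π) {B : Finset ℕ}
    (hB : B ∈ π) (hodd : Odd B.card) : IsCompatible (crownLe n) π := by
  obtain ⟨hpart, hconn⟩ := hπ
  obtain ⟨f, hf⟩ := exists_potential_of_ascent_of_descent
    (hpart.exists_not_sameBlock_crownSucc (fun _ => odd_crownSucc_iff) hB hodd)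
    (hpart.exists_not_sameBlock_crownSucc (fun _ => even_crownSucc_iff) hB hodd)
  refine hpart.isCompatible_of_potential f (fun C hC x hx y hy => ?_) fun x hx y hy hxy hsep => ?_
  · have hsub := hpart.2.1 C hC
    exact (hconn C hC).eq_of_forall_crownSucc hsub
      (fun z hz hz' => (hf z (hsub hz)).1 (not_not.2 ⟨C, hC, hz, hz'⟩)) hx hy
  · rcases hxy with rfl | hcover
    · obtain ⟨C, ⟨hC, hxC⟩, -⟩ := hpart.2.2 x hx
      exact absurd ⟨C, hC, hxC, hxC⟩ hsep
    · rcases hcover.eq_crownSucc hx hy with rfl | rfl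
      · exact (hf x hx).2.1 hcover.1 hsep
      · exact (hf y hy).2.2 hcover.2.1 fun ⟨C, hC, hyC, hxC⟩ => hsep ⟨C, hC, hxC, hyC⟩

end CrownPartition

/-- Lemma 3.2: a connected partition of the crown poset `C_{2n}` with at least
two blocks is compatible iff at least one block has odd cardinality. -/
theorem crown_compatible_iff_odd_block (n : ℕ) (hn : 2 ≤ n)
    (π : Finset (Finset ℕ))
    (hconn : IsConnectedPartition (crownGround n) (compGraph (crownLe n)) π)
    (hcard : 2 ≤ π.card) :
    IsCompatible (crownLe n) π ↔ ∃ B ∈ π, Odd B.card :=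
  ⟨hconn.exists_odd_block_of_isCompatible hcard,
    fun ⟨_, hB, hodd⟩ => hconn.isCompatible_of_odd_block hB hodd⟩
end

section
/- For integers n ≥ 1, i and m with 2 ≤ i ≤ 2n and 1 ≤ m ≤ ⌊i/2⌋, the number of partitions of the vertex set of the path graph on 2n vertices into exactly i blocks, each inducing a connected subgraph, such that exactly 2m of the blocks have odd cardinality, equals C(i, 2m) · C(n+m−1, i−1). -/
/-- The path graph on `ℕ` (restricted to a ground set `{1,…,m}`, this is the
path graph `P_m`): consecutive integers are adjacent. -/
def pathGraph : SimpleGraph ℕ := SimpleGraph.fromRel (fun x y => x + 1 = y)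

/-!
A connected set of vertices of a path is an interval, so a connected partition of the path on `N`
vertices into `i` blocks is the same as a composition of `N` into `i` positive parts, the parts
being the block sizes. Replacing each part `a` by `⌈a / 2⌉` and remembering which `k` of the `i`
parts are odd turns the compositions of `N` with `k` odd parts into pairs of a `k`-element set of
positions and an arbitrary composition of `(N + k) / 2` into `i` parts, since
`2 * ∑ ⌈a / 2⌉ = N + k`.
-/

lemma induce_hasse {α : Type*} [Preorder α] (s : Set α) [s.OrdConnected] :
    (SimpleGraph.hasse α).induce s = SimpleGraph.hasse s := by
  ext x y
  have covBy_iff (a b : s) : (a : α) ⋖ b ↔ a ⋖ b :=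
    Set.OrdConnected.apply_covBy_apply_iff (OrderEmbedding.subtype (· ∈ s))
      (by simpa using ‹s.OrdConnected›)
  simp only [SimpleGraph.comap_adj, Function.Embedding.subtype_apply, SimpleGraph.hasse_adj,
    covBy_iff]

section HasseGraph

variable {α : Type*} [LinearOrder α] {s : Set α}

lemma ordConnected_of_preconnected_induce_hasse
    (h : ((SimpleGraph.hasse α).induce s).Preconnected) : s.OrdConnected := by
  refine ⟨fun x hx y hy z ⟨hxz, hzy⟩ ↦ by_contra fun hz ↦ ?_⟩
  have hxz : x < z := hxz.lt_of_ne fun e ↦ hz (e ▸ hx)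
  obtain ⟨walk⟩ := h ⟨x, hx⟩ ⟨y, hy⟩
  obtain ⟨⟨⟨u, v⟩, huv⟩, -, hu : (u : α) < z, hv : ¬ (v : α) < z⟩ :=
    walk.exists_boundary_dart {w | (w : α) < z} hxz hzy.not_gt
  have hzv : z < v := (not_lt.mp hv).lt_of_ne fun e ↦ hz (e ▸ v.2)
  obtain huv | hvu : (u : α) ⋖ v ∨ (v : α) ⋖ u := huv
  · exact huv.2 hu hzv
  · exact hvu.lt.asymm (hu.trans hzv)

lemma preconnected_induce_hasse_iff [SuccOrder α] [IsSuccArchimedean α] :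
    ((SimpleGraph.hasse α).induce s).Preconnected ↔ s.OrdConnected := by
  refine ⟨ordConnected_of_preconnected_induce_hasse, fun _ ↦ ?_⟩
  rw [induce_hasse]
  exact SimpleGraph.hasse_preconnected_of_succ s

end HasseGraph

lemma pathGraph_eq_hasse : pathGraph = SimpleGraph.hasse ℕ := by
  ext x y
  simp only [pathGraph, SimpleGraph.fromRel_adj, SimpleGraph.hasse_adj,
    Nat.covBy_iff_add_one_eq]
  lia

lemma blockConnected_pathGraph_iff {B : Finset ℕ} :
    BlockConnected pathGraph B ↔ B.Nonempty ∧ (B : Set ℕ).OrdConnected := by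
  rw [BlockConnected, SimpleGraph.connected_iff, pathGraph_eq_hasse,
    preconnected_induce_hasse_iff, and_comm]
  simp only [SetLike.coe_sort_coe, Finset.nonempty_coe_sort]

lemma blockConnected_pathGraph_Ioc {a b : ℕ} (hab : a < b) :
    BlockConnected pathGraph (Finset.Ioc a b) :=
  blockConnected_pathGraph_iff.mpr
    ⟨Finset.nonempty_Ioc.mpr hab, by simpa using Set.ordConnected_Ioc⟩

lemma BlockConnected.exists_eq_Ioc {B : Finset ℕ} {b : ℕ} (hB : BlockConnected pathGraph B)
    (hb : b ∈ B) (hsub : B ⊆ Finset.Ioc 0 b) : ∃ a < b, B = Finset.Ioc a b := by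
  obtain ⟨hne, hord⟩ := blockConnected_pathGraph_iff.mp hB
  have hmin : 0 < B.min' hne := (Finset.mem_Ioc.mp (hsub (B.min'_mem hne))).1
  have hmin_le : B.min' hne ≤ b := B.min'_le b hb
  refine ⟨B.min' hne - 1, by lia, ?_⟩
  ext x
  rw [Finset.mem_Ioc]
  constructor
  · intro hx
    have := B.min'_le x hx
    exact ⟨by lia, (Finset.mem_Ioc.mp (hsub hx)).2⟩
  · rintro ⟨hx, hxb⟩
    exact hord.out (B.min'_mem hne) hb ⟨by lia, hxb⟩

section Partition

variable {s B : Finset ℕ} {π : Finset (Finset ℕ)} {G : SimpleGraph ℕ}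

lemma isPartitionOn_empty_iff : IsPartitionOn ∅ π ↔ π = ∅ := by
  constructor
  · rintro ⟨hne, hsub, -⟩
    refine Finset.eq_empty_of_forall_notMem fun B hB ↦ ?_
    exact (hne B hB).ne_empty (Finset.subset_empty.mp (hsub B hB))
  · rintro rfl
    simp [IsPartitionOn]

lemma IsPartitionOn.eq_of_mem_of_mem {C : Finset ℕ} {x : ℕ} (h : IsPartitionOn s π) (hB : B ∈ π)
    (hC : C ∈ π) (hxB : x ∈ B) (hxC : x ∈ C) : B = C :=
  (h.2.2 x (h.2.1 B hB hxB)).unique ⟨hB, hxB⟩ ⟨hC, hxC⟩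

lemma IsPartitionOn.notMem_of_disjoint (h : IsPartitionOn s π) (hne : B.Nonempty)
    (hdisj : Disjoint s B) : B ∉ π := fun hB ↦
  hne.ne_empty (Finset.disjoint_self_iff_empty B |>.mp (hdisj.mono_left (h.2.1 B hB)))

lemma IsPartitionOn.insert (h : IsPartitionOn s π) (hne : B.Nonempty) (hdisj : Disjoint s B) :
    IsPartitionOn (s ∪ B) (insert B π) := by
  obtain ⟨hnonempty, hsub, hunique⟩ := h
  refine ⟨Finset.forall_mem_insert _ _ _ |>.mpr ⟨hne, hnonempty⟩,
    Finset.forall_mem_insert _ _ _ |>.mpr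
      ⟨Finset.subset_union_right, fun C hC ↦ (hsub C hC).trans Finset.subset_union_left⟩,
    fun x hx ↦ ?_⟩
  by_cases hxB : x ∈ B
  · refine ⟨B, ⟨Finset.mem_insert_self B π, hxB⟩, ?_⟩
    rintro C ⟨hC, hxC⟩
    refine (Finset.mem_insert.mp hC).resolve_right fun hC ↦ ?_
    exact Finset.disjoint_left.mp hdisj (hsub C hC hxC) hxB
  · obtain ⟨C, ⟨hC, hxC⟩, huniq⟩ := hunique x ((Finset.mem_union.mp hx).resolve_right hxB)
    refine ⟨C, ⟨Finset.mem_insert_of_mem hC, hxC⟩, ?_⟩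
    rintro D ⟨hD, hxD⟩
    exact huniq D ⟨Finset.mem_of_mem_insert_of_ne hD fun e ↦ hxB (e ▸ hxD), hxD⟩

lemma IsPartitionOn.erase (h : IsPartitionOn s π) (hB : B ∈ π) :
    IsPartitionOn (s \ B) (π.erase B) := by
  have ⟨hnonempty, hsub, hunique⟩ := h
  refine ⟨fun C hC ↦ hnonempty C (Finset.mem_of_mem_erase hC), fun C hC x hxC ↦ ?_,
    fun x hx ↦ ?_⟩
  · obtain ⟨hne, hC⟩ := Finset.mem_erase.mp hC
    exact Finset.mem_sdiff.mpr ⟨hsub C hC hxC, fun hxB ↦ hne (h.eq_of_mem_of_mem hC hB hxC hxB)⟩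
  · obtain ⟨hxs, hxB⟩ := Finset.mem_sdiff.mp hx
    obtain ⟨C, ⟨hC, hxC⟩, huniq⟩ := hunique x hxs
    exact ⟨C, ⟨Finset.mem_erase.mpr ⟨fun e ↦ hxB (e ▸ hxC), hC⟩, hxC⟩,
      fun D ⟨hD, hxD⟩ ↦ huniq D ⟨Finset.mem_of_mem_erase hD, hxD⟩⟩

end Partition

/-- The partition of the interval `(0, l.sum]` into intervals whose sizes are the entries of `l`.
The sizes are listed from the topmost interval down, so that the recursion removes the block
containing the last vertex. -/
def intervalBlocks : List ℕ → Finset (Finset ℕ)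
  | [] => ∅
  | a :: l => insert (Finset.Ioc l.sum (l.sum + a)) (intervalBlocks l)

section IntervalBlocks

variable {l l' : List ℕ}

lemma isConnectedPartition_intervalBlocks (hl : ∀ a ∈ l, 0 < a) :
    IsConnectedPartition (Finset.Ioc 0 l.sum) pathGraph (intervalBlocks l) := by
  induction l with
  | nil => exact ⟨isPartitionOn_empty_iff.mpr rfl, by simp [intervalBlocks]⟩
  | cons a l ih =>
    obtain ⟨ha, hl⟩ := List.forall_mem_cons.mp hl
    obtain ⟨hpart, hconn⟩ := ih hl
    have hunion : Finset.Ioc 0 (a :: l).sum =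
        Finset.Ioc 0 l.sum ∪ Finset.Ioc l.sum (l.sum + a) := by
      rw [Finset.Ioc_union_Ioc_eq_Ioc (Nat.zero_le _) (Nat.le_add_right _ _), List.sum_cons,
        add_comm]
    have htop : l.sum < l.sum + a := Nat.lt_add_of_pos_right ha
    rw [hunion]
    exact ⟨hpart.insert (Finset.nonempty_Ioc.mpr htop)
        (Finset.Ioc_disjoint_Ioc_of_le le_rfl),
      Finset.forall_mem_insert _ _ _ |>.mpr ⟨blockConnected_pathGraph_Ioc htop, hconn⟩⟩

lemma Ioc_notMem_intervalBlocks {a : ℕ} (hl : ∀ a ∈ l, 0 < a) (ha : 0 < a) :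
    Finset.Ioc l.sum (l.sum + a) ∉ intervalBlocks l :=
  (isConnectedPartition_intervalBlocks hl).1.notMem_of_disjoint
    (Finset.nonempty_Ioc.mpr (Nat.lt_add_of_pos_right ha))
    (Finset.Ioc_disjoint_Ioc_of_le le_rfl)

lemma map_card_intervalBlocks (hl : ∀ a ∈ l, 0 < a) :
    (intervalBlocks l).val.map Finset.card = l := by
  induction l with
  | nil => rfl
  | cons a l ih =>
    obtain ⟨ha, hl⟩ := List.forall_mem_cons.mp hl
    rw [intervalBlocks, Finset.insert_val_of_notMem (Ioc_notMem_intervalBlocks hl ha),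
      Multiset.map_cons, ih hl, Nat.card_Ioc, Nat.add_sub_cancel_left, Multiset.cons_coe]

lemma card_intervalBlocks (hl : ∀ a ∈ l, 0 < a) : (intervalBlocks l).card = l.length := by
  simpa using congrArg Multiset.card (map_card_intervalBlocks hl)

lemma intervalBlocks_inj (hl : ∀ a ∈ l, 0 < a) (hl' : ∀ a ∈ l', 0 < a) (hsum : l.sum = l'.sum)
    (h : intervalBlocks l = intervalBlocks l') : l = l' := by
  induction l generalizing l' with
  | nil =>
    have hcard := map_card_intervalBlocks hl'
    rw [← h] at hcard
    exact (Multiset.coe_eq_zero _ |>.mp hcard.symm).symm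
  | cons a l ih =>
    obtain ⟨ha, hl_pos⟩ := List.forall_mem_cons.mp hl
    cases l' with
    | nil =>
      rw [List.sum_cons, List.sum_nil] at hsum
      lia
    | cons b l' =>
      have hpart := (isConnectedPartition_intervalBlocks hl').1
      obtain ⟨hb, hl'_pos⟩ := List.forall_mem_cons.mp hl'
      rw [List.sum_cons, List.sum_cons] at hsum
      have hblock : Finset.Ioc l.sum (l.sum + a) = Finset.Ioc l'.sum (l'.sum + b) :=
        hpart.eq_of_mem_of_mem (x := l.sum + a) (h ▸ Finset.mem_insert_self _ _)
          (Finset.mem_insert_self _ _) (Finset.mem_Ioc.mpr (by lia)) (Finset.mem_Ioc.mpr (by lia))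
      obtain rfl : a = b := by simpa using congrArg Finset.card hblock
      have hrest := congrArg (Finset.erase · (Finset.Ioc l.sum (l.sum + a))) h
      have hsum : l.sum = l'.sum := Nat.add_left_cancel hsum
      simp only [intervalBlocks] at hrest
      rw [Finset.erase_insert (Ioc_notMem_intervalBlocks hl_pos ha), hsum,
        Finset.erase_insert (Ioc_notMem_intervalBlocks hl'_pos hb)] at hrest
      rw [ih hl_pos hl'_pos hsum hrest]

lemma exists_intervalBlocks_eq {N : ℕ} {π : Finset (Finset ℕ)}
    (hπ : IsConnectedPartition (Finset.Ioc 0 N) pathGraph π) :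
    ∃ l : List ℕ, (∀ a ∈ l, 0 < a) ∧ l.sum = N ∧ intervalBlocks l = π := by
  induction N using Nat.strong_induction_on generalizing π with
  | _ N ih =>
    obtain ⟨hpart, hconn⟩ := hπ
    obtain rfl | hN := N.eq_zero_or_pos
    · exact ⟨[], by simp, rfl, (isPartitionOn_empty_iff.mp hpart).symm⟩
    obtain ⟨B, ⟨hB, hNB⟩, -⟩ := hpart.2.2 N (Finset.mem_Ioc.mpr ⟨hN, le_rfl⟩)
    obtain ⟨M, hMN, rfl⟩ := (hconn B hB).exists_eq_Ioc hNB (hpart.2.1 B hB)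
    have hrest : Finset.Ioc 0 N \ Finset.Ioc M N = Finset.Ioc 0 M := by
      ext x
      simp only [Finset.mem_sdiff, Finset.mem_Ioc]
      lia
    obtain ⟨l, hl, rfl, hblocks⟩ := ih M hMN
      ⟨hrest ▸ hpart.erase hB, fun C hC ↦ hconn C (Finset.mem_of_mem_erase hC)⟩
    refine ⟨(N - l.sum) :: l, List.forall_mem_cons.mpr ⟨Nat.sub_pos_of_lt hMN, hl⟩, ?_, ?_⟩
    · rw [List.sum_cons, Nat.sub_add_cancel hMN.le]
    · rw [intervalBlocks, hblocks, Nat.add_sub_of_le hMN.le, Finset.insert_erase hB]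

end IntervalBlocks

/-- The compositions of `n` whose parts are indexed by `ι`: functions `ι → ℕ` with positive values
and sum `n`. -/
def compositions (ι : Type*) [Fintype ι] [DecidableEq ι] (n : ℕ) : Finset (ι → ℕ) :=
  {f ∈ Finset.piAntidiag Finset.univ n | ∀ j, 0 < f j}

section Compositions

variable {ι : Type*} [DecidableEq ι]

lemma card_piAntidiag_nat (s : Finset ι) (n : ℕ) :
    (s.piAntidiag n).card = (s.card + n - 1).choose n := by
  rw [← Finset.card_finsuppAntidiag_nat_eq_choose, Finset.finsuppAntidiag, Finset.card_map,
    Finset.card_attach]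

variable [Fintype ι]

lemma mem_compositions {n : ℕ} {f : ι → ℕ} :
    f ∈ compositions ι n ↔ ∑ j, f j = n ∧ ∀ j, 0 < f j := by
  simp [compositions]

lemma card_compositions_add_card (n : ℕ) :
    (compositions ι (n + Fintype.card ι)).card =
      (Finset.univ.piAntidiag n : Finset (ι → ℕ)).card := by
  have sum_add_one (g : ι → ℕ) : ∑ j, (g j + 1) = ∑ j, g j + Fintype.card ι := by
    rw [Finset.sum_add_distrib, Fintype.card_eq_sum_ones]
  have sub_add_one {f : ι → ℕ} (hpos : ∀ j, 0 < f j) : (fun j ↦ f j - 1 + 1) = f :=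
    funext fun j ↦ Nat.sub_add_cancel (hpos j)
  refine Finset.card_nbij' (fun f j ↦ f j - 1) (fun g j ↦ g j + 1) (fun f hf ↦ ?_)
    (fun g hg ↦ ?_) (fun f hf ↦ sub_add_one (mem_compositions.mp hf).2) (fun g _ ↦ rfl)
  · obtain ⟨hsum, hpos⟩ := mem_compositions.mp hf
    rw [← sub_add_one hpos, sum_add_one, Nat.add_right_cancel_iff] at hsum
    simpa using hsum
  · refine mem_compositions.mpr ⟨?_, fun j ↦ Nat.succ_pos _⟩
    rw [sum_add_one, (Finset.mem_piAntidiag.mp hg).1]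

lemma card_compositions [Nonempty ι] {n : ℕ} (hn : 0 < n) :
    (compositions ι n).card = (n - 1).choose (Fintype.card ι - 1) := by
  have hι : 0 < Fintype.card ι := Fintype.card_pos
  obtain hlt | hle := lt_or_ge n (Fintype.card ι)
  · rw [Nat.choose_eq_zero_of_lt (by lia), Finset.card_eq_zero]
    refine Finset.eq_empty_of_forall_notMem fun f hf ↦ ?_
    obtain ⟨hsum, hpos⟩ := mem_compositions.mp hf
    have : Fintype.card ι ≤ ∑ j, f j := by
      simpa using Finset.card_nsmul_le_sum Finset.univ f 1 fun j _ ↦ hpos j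
    lia
  · obtain ⟨m, rfl⟩ := Nat.exists_eq_add_of_le' hle
    rw [card_compositions_add_card, card_piAntidiag_nat, Finset.card_univ, add_comm]
    exact Nat.choose_symm_of_eq_add (by lia)

end Compositions

/-- The function whose halves, rounded up, are `h` and whose odd values are exactly those on `S`:
it decodes a composition from its halves and the positions of its odd parts. Where `h` vanishes the
subtraction truncates and the value is `0`. -/
def ofHalves {ι : Type*} [DecidableEq ι] (S : Finset ι) (h : ι → ℕ) (j : ι) : ℕ :=
  2 * h j - if j ∈ S then 1 else 0

section Halves

variable {ι : Type*}

lemma two_mul_sum_half [Fintype ι] (f : ι → ℕ) :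
    2 * ∑ j, (f j + 1) / 2 = ∑ j, f j + Finset.card {j | Odd (f j)} := by
  rw [Finset.mul_sum, Finset.card_filter, ← Finset.sum_add_distrib]
  refine Finset.sum_congr rfl fun j _ ↦ ?_
  split_ifs with hodd <;> rw [Nat.odd_iff] at hodd <;> lia

variable [DecidableEq ι] {S : Finset ι} {h : ι → ℕ} {j : ι}

lemma ofHalves_pos (hj : 0 < h j) : 0 < ofHalves S h j := by
  rw [ofHalves]
  split_ifs <;> lia

lemma odd_ofHalves_iff (hj : 0 < h j) : Odd (ofHalves S h j) ↔ j ∈ S := by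
  rw [ofHalves, Nat.odd_iff]
  split_ifs with hS <;> simp only [hS] <;> lia

lemma half_ofHalves (S : Finset ι) (h : ι → ℕ) (j : ι) : (ofHalves S h j + 1) / 2 = h j := by
  rw [ofHalves]
  split_ifs <;> lia

variable [Fintype ι]

lemma ofHalves_half (f : ι → ℕ) :
    ofHalves {j | Odd (f j)} (fun j ↦ (f j + 1) / 2) = f := by
  funext j
  simp only [ofHalves, Finset.mem_filter_univ, Nat.odd_iff]
  split_ifs <;> lia

lemma card_filter_odd_compositions {n k s : ℕ} (hs : n + k = 2 * s) :
    Finset.card {f ∈ compositions ι n | Finset.card {j | Odd (f j)} = k} =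
      (Fintype.card ι).choose k * (compositions ι s).card := by
  rw [← Finset.card_univ, ← Finset.card_powersetCard, ← Finset.card_product]
  refine Finset.card_nbij' (fun f ↦ (Finset.univ.filter fun j ↦ Odd (f j), fun j ↦ (f j + 1) / 2))
    (fun p ↦ ofHalves p.1 p.2) (fun f hf ↦ ?_) (fun ⟨S, h⟩ hp ↦ ?_)
    (fun f _ ↦ ofHalves_half f) (fun ⟨S, h⟩ hp ↦ ?_)
  · obtain ⟨hf, hodd⟩ := Finset.mem_filter.mp hf
    obtain ⟨hsum, hpos⟩ := mem_compositions.mp hf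
    have hhalves := two_mul_sum_half f
    refine Finset.mem_product.mpr ⟨Finset.mem_powersetCard_univ.mpr hodd,
      mem_compositions.mpr ⟨by lia, fun j ↦ ?_⟩⟩
    have := hpos j
    lia
  all_goals
    obtain ⟨hS, hh⟩ := Finset.mem_product.mp hp
    obtain ⟨hsum, hpos⟩ := mem_compositions.mp hh
    have hodd : ({j | Odd (ofHalves S h j)} : Finset ι) = S := by
      ext j
      rw [Finset.mem_filter_univ, odd_ofHalves_iff (hpos j)]
  · have hcard : S.card = k := Finset.mem_powersetCard_univ.mp hS
    have hhalves := two_mul_sum_half (ofHalves S h)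
    simp only [half_ofHalves, hodd, hsum, hcard] at hhalves
    exact Finset.mem_filter.mpr
      ⟨mem_compositions.mpr ⟨by lia, fun j ↦ ofHalves_pos (hpos j)⟩,
        (congrArg Finset.card hodd).trans hcard⟩
  · exact Prod.ext hodd (funext (half_ofHalves S h))

end Halves

lemma card_filter_intervalBlocks_ofFn {i : ℕ} {f : Fin i → ℕ} (p : ℕ → Prop) [DecidablePred p]
    (hf : ∀ j, 0 < f j) :
    ((intervalBlocks (List.ofFn f)).filter fun B ↦ p B.card).card =
      Finset.card {j | p (f j)} := by
  have hsizes : (intervalBlocks (List.ofFn f)).val.map Finset.card = Finset.univ.val.map f := by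
    rw [map_card_intervalBlocks (List.forall_mem_ofFn_iff.mpr hf), Fin.univ_val_map]
  have hcount := congrArg (Multiset.countP p) hsizes
  rwa [Multiset.countP_map, Multiset.countP_map] at hcount

lemma bijOn_intervalBlocks_ofFn (N i : ℕ) :
    Set.BijOn (fun f : Fin i → ℕ ↦ intervalBlocks (List.ofFn f)) (compositions (Fin i) N)
      {π | IsConnectedPartition (Finset.Ioc 0 N) pathGraph π ∧ π.card = i} := by
  refine ⟨fun f hf ↦ ?_, fun f hf g hg hfg ↦ ?_, fun π ⟨hπ, hcard⟩ ↦ ?_⟩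
  · obtain ⟨rfl, hparts⟩ := mem_compositions.mp hf
    have hpos := List.forall_mem_ofFn_iff.mpr hparts
    rw [← List.sum_ofFn]
    exact ⟨isConnectedPartition_intervalBlocks hpos,
      (card_intervalBlocks hpos).trans List.length_ofFn⟩
  · obtain ⟨hfsum, hfpos⟩ := mem_compositions.mp hf
    obtain ⟨hgsum, hgpos⟩ := mem_compositions.mp hg
    refine List.ofFn_injective (intervalBlocks_inj (List.forall_mem_ofFn_iff.mpr hfpos)
      (List.forall_mem_ofFn_iff.mpr hgpos) ?_ hfg)
    rw [List.sum_ofFn, List.sum_ofFn, hfsum, hgsum]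
  · obtain ⟨l, hl, rfl, rfl⟩ := exists_intervalBlocks_eq hπ
    obtain rfl : l.length = i := (card_intervalBlocks hl).symm.trans hcard
    refine ⟨l.get, mem_compositions.mpr ⟨?_, fun j ↦ hl _ (l.get_mem j)⟩, ?_⟩
    · rw [← List.sum_ofFn, List.ofFn_get]
    · simp only [List.ofFn_get]

lemma ncard_connectedPartitions_filter (N i k : ℕ) (p : ℕ → Prop) [DecidablePred p] :
    {π | IsConnectedPartition (Finset.Ioc 0 N) pathGraph π ∧ π.card = i ∧
        (π.filter fun B ↦ p B.card).card = k}.ncard =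
      Finset.card {f ∈ compositions (Fin i) N | Finset.card {j | p (f j)} = k} := by
  have hbij := (bijOn_intervalBlocks_ofFn N i).subset_right
    (r := {π | IsConnectedPartition (Finset.Ioc 0 N) pathGraph π ∧ π.card = i ∧
      (π.filter fun B ↦ p B.card).card = k}) fun π hπ ↦ ⟨hπ.1, hπ.2.1⟩
  rw [← hbij.ncard_eq, ← Set.ncard_coe_finset]
  congr 1
  ext f
  rw [Finset.mem_coe, Finset.mem_filter]
  refine and_congr_right fun hf ↦ ?_
  obtain ⟨hπ, hcard⟩ := (bijOn_intervalBlocks_ofFn N i).mapsTo hf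
  rw [← card_filter_intervalBlocks_ofFn p (mem_compositions.mp hf).2]
  exact ⟨fun h ↦ h.2.2, fun h ↦ ⟨hπ, hcard, h⟩⟩

theorem path_odd_block_partitions_general {N i k s : ℕ} (hi : 0 < i) (hs : 0 < s)
    (hNk : N + k = 2 * s) :
    {π : Finset (Finset ℕ) |
        IsConnectedPartition (Finset.Icc 1 N) pathGraph π ∧ π.card = i ∧
        (π.filter (fun B => Odd B.card)).card = k}.ncard
      = i.choose k * (s - 1).choose (i - 1) := by
  have : Nonempty (Fin i) := ⟨⟨0, hi⟩⟩
  have hIcc : Finset.Icc 1 N = Finset.Ioc 0 N := Finset.Icc_add_one_left_eq_Ioc 0 N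
  rw [hIcc]
  calc
    _ = Finset.card {f ∈ compositions (Fin i) N | Finset.card {j | Odd (f j)} = k} :=
      ncard_connectedPartitions_filter N i k Odd
    _ = i.choose k * (compositions (Fin i) s).card := by
      rw [card_filter_odd_compositions hNk, Fintype.card_fin]
    _ = i.choose k * (s - 1).choose (i - 1) := by rw [card_compositions hs, Fintype.card_fin]

/-- The number of connected partitions of the path graph `P_{2n}` into `i`
blocks, exactly `2m` of which have odd cardinality, is
`C(i, 2m) · C(n+m−1, i−1)`. -/
theorem path_odd_block_partitions (n i m : ℕ) (hn : 1 ≤ n)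
    (hi2 : 2 ≤ i) (hi : i ≤ 2 * n) (hm1 : 1 ≤ m) (hm : m ≤ i / 2) :
    {π : Finset (Finset ℕ) |
        IsConnectedPartition (Finset.Icc 1 (2 * n)) pathGraph π ∧ π.card = i ∧
        (π.filter (fun B => Odd B.card)).card = 2 * m}.ncard
      = i.choose (2 * m) * (n + m - 1).choose (i - 1) :=
  path_odd_block_partitions_general (by lia) (by lia) (by lia)
end
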